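/- (Ptolemy relation for λ-lengths.) Let θ₁ < θ₂ < θ₃ < θ₄ < θ₁ + 2π be real numbers and r₁, r₂, r₃, r₄ > 0, and set v_i = r_i · (cos θ_i, sin θ_i, 1) ∈ L⁺ for i = 1,2,3,4 (so v₁, v₂, v₃, v₄ are points of the positive light cone whose ideal points lie in cyclic order, the vertices of a decorated ideal quadrilateral). Then λ(v₁,v₃) · λ(v₂,v₄) = λ(v₁,v₂) · λ(v₃,v₄) + λ(v₂,v₃) · λ(v₁,v₄); that is, the product of the λ-lengths of the two diagonals equals the sum of the products of the λ-lengths of opposite sides. -/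

import Mathlib

/-!
The λ-length of two light-cone vectors is the geometric mean of their heights times the absolute
value of the sine of half the angle between them. Each vertex occurs once in every term of the
Ptolemy relation, so the heights only contribute a common factor, and the cyclic order fixes the
signs of the sines. What remains is Ptolemy's identity for sines, which is the three-term Plücker
relation for the unit vectors at half the given angles.
-/

section LambdaLength

open Real

/-- The Minkowski form of signature `(2, 1)` on `ℝ³`, with the last coordinate timelike. -/
def minkowskiForm (x y : Fin 3 → ℝ) : ℝ :=
  x 0 * y 0 + x 1 * y 1 - x 2 * y 2

/-- Penner's λ-length of two vectors of the positive light cone, in the normalization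
`√(-⟨x, y⟩ / 2)`. It is defined on all of `ℝ³`, with value `0` where `⟨x, y⟩` is positive. -/
noncomputable def lambdaLength (x y : Fin 3 → ℝ) : ℝ :=
  √(-minkowskiForm x y / 2)

/-- The light-cone vector of height `r` over the ideal point at angle `θ`. It lies on the positive
light cone when `0 < r`. -/
noncomputable def lightConePoint (r θ : ℝ) : Fin 3 → ℝ :=
  r • ![cos θ, sin θ, 1]

lemma minkowskiForm_lightConePoint (r s α β : ℝ) :
    minkowskiForm (lightConePoint r α) (lightConePoint s β) = -(r * s * (1 - cos (β - α))) := by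
  simp only [minkowskiForm, lightConePoint, Pi.smul_apply, smul_eq_mul, Matrix.cons_val, cos_sub]
  ring

lemma lambdaLength_lightConePoint (r s α β : ℝ) :
    lambdaLength (lightConePoint r α) (lightConePoint s β) = √(r * s) * |sin ((β - α) / 2)| := by
  have one_sub_cos_nonneg : 0 ≤ (1 - cos (β - α)) / 2 := by
    linarith [cos_le_one (β - α)]
  rw [lambdaLength, minkowskiForm_lightConePoint, neg_neg, mul_div_assoc,
    sqrt_mul' _ one_sub_cos_nonneg, abs_sin_half]

lemma lambdaLength_lightConePoint_of_le (r s : ℝ) {α β : ℝ} (h : α ≤ β) (h' : β ≤ α + 2 * π) :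
    lambdaLength (lightConePoint r α) (lightConePoint s β) = √(r * s) * sin (β / 2 - α / 2) := by
  rw [lambdaLength_lightConePoint, sub_div, abs_of_nonneg]
  exact sin_nonneg_of_nonneg_of_le_pi (by linarith) (by linarith)

lemma sin_sub_mul_sin_sub_eq_add (a b c d : ℝ) :
    sin (c - a) * sin (d - b) = sin (b - a) * sin (d - c) + sin (c - b) * sin (d - a) := by
  simp only [sin_sub]
  ring

end LambdaLength

/-- **Ptolemy relation for λ-lengths.** For `θ₁ < θ₂ < θ₃ < θ₄ < θ₁ + 2π`
and `r₁, r₂, r₃, r₄ > 0`, the points `vᵢ = rᵢ(cos θᵢ, sin θᵢ, 1)` of the positive light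
cone satisfy `λ(v₁,v₃)·λ(v₂,v₄) = λ(v₁,v₂)·λ(v₃,v₄) + λ(v₂,v₃)·λ(v₁,v₄)`. -/
theorem stmt12 (θ r : Fin 4 → ℝ)
    (hθ : θ 0 < θ 1 ∧ θ 1 < θ 2 ∧ θ 2 < θ 3 ∧ θ 3 < θ 0 + 2 * Real.pi)
    (hr : ∀ i, 0 < r i) :
    let v : Fin 4 → Fin 3 → ℝ := fun i => r i • ![Real.cos (θ i), Real.sin (θ i), 1]
    let lam : (Fin 3 → ℝ) → (Fin 3 → ℝ) → ℝ := fun x y =>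
      Real.sqrt (-(x 0 * y 0 + x 1 * y 1 - x 2 * y 2) / 2)
    lam (v 0) (v 2) * lam (v 1) (v 3) =
      lam (v 0) (v 1) * lam (v 2) (v 3) + lam (v 1) (v 2) * lam (v 0) (v 3) := by
  intro v lam
  obtain ⟨h01, h12, h23, h30⟩ := hθ
  have lam_eq (i j : Fin 4) (h : θ i ≤ θ j) (h' : θ j ≤ θ i + 2 * Real.pi) :
      lam (v i) (v j) = √(r i) * √(r j) * Real.sin (θ j / 2 - θ i / 2) := by
    rw [← Real.sqrt_mul (hr i).le]
    exact lambdaLength_lightConePoint_of_le (r i) (r j) h h'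
  rw [lam_eq 0 2 (by linarith) (by linarith), lam_eq 1 3 (by linarith) (by linarith),
    lam_eq 0 1 (by linarith) (by linarith), lam_eq 2 3 (by linarith) (by linarith),
    lam_eq 1 2 (by linarith) (by linarith), lam_eq 0 3 (by linarith) (by linarith)]
  linear_combination √(r 0) * √(r 1) * √(r 2) * √(r 3) *
    sin_sub_mul_sin_sub_eq_add (θ 0 / 2) (θ 1 / 2) (θ 2 / 2) (θ 3 / 2)
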